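/- For every integer m ≥ 4, the set of even elements of F^cyc_m equals {2j : j ∈ F_{m-1}} \ {0}, and the set of odd elements of F^cyc_m equals {4j+1 : j ∈ F_{m-3}}. -/

import Mathlib

/-!
For `i < 2 ^ m`, being cyclically fibbinary means being fibbinary with the top and bottom bits not
both set. An even number has bottom bit `0`, so only its other `m - 1` bits are constrained. An odd
number has bottom bit `1`, which forces bit `1` and the top bit to vanish, and the remaining
`m - 3` bits are an arbitrary fibbinary word.
-/

open Polynomial

/-- `fibSet m` is the set of fibbinary integers below `2^m`: integers in `{0,…,2^m-1}`
whose binary representation has no two consecutive ones. -/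
noncomputable def fibSet (m : ℕ) : Finset ℕ :=
  @Finset.filter _ (fun i => ∀ j : ℕ, ¬(i.testBit j ∧ i.testBit (j + 1)))
    (Classical.decPred _) (Finset.range (2 ^ m))

/-- `fibCycSet m` is the set of integers in `{1,…,2^m-2}` whose `m`-bit binary
representation has no two cyclically consecutive ones. -/
def fibCycSet (m : ℕ) : Finset ℕ :=
  (Finset.Icc 1 (2 ^ m - 2)).filter
    (fun i => ∀ j < m, ¬(i.testBit j ∧ i.testBit ((j + 1) % m)))

/-- A natural number is fibbinary if its binary representation has no two consecutive ones;
position `0` is the least significant one. -/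
def IsFibbinary (n : ℕ) : Prop :=
  ∀ j, ¬(n.testBit j ∧ n.testBit (j + 1))

theorem isFibbinary_two_mul {n : ℕ} : IsFibbinary (2 * n) ↔ IsFibbinary n := by
  unfold IsFibbinary
  rw [← Nat.and_forall_add_one]
  simp [Nat.testBit_succ]

theorem isFibbinary_two_mul_add_one {n : ℕ} :
    IsFibbinary (2 * n + 1) ↔ Even n ∧ IsFibbinary n := by
  have half : (2 * n + 1) / 2 = n := by lia
  unfold IsFibbinary
  rw [← Nat.and_forall_add_one]
  simp [Nat.testBit_succ, half, Nat.even_iff]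

theorem isFibbinary_four_mul_add_one {n : ℕ} : IsFibbinary (4 * n + 1) ↔ IsFibbinary n := by
  rw [show 4 * n + 1 = 2 * (2 * n) + 1 by ring, isFibbinary_two_mul_add_one, isFibbinary_two_mul]
  exact and_iff_right (even_two_mul n)

theorem mem_fibSet {m i : ℕ} : i ∈ fibSet m ↔ i < 2 ^ m ∧ IsFibbinary i := by
  simp [fibSet, IsFibbinary]

theorem isFibbinary_iff_forall_lt {m i : ℕ} (hi : i < 2 ^ (m + 1)) :
    IsFibbinary i ↔ ∀ j < m, ¬(i.testBit j ∧ i.testBit (j + 1)) := by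
  refine ⟨fun h j _ ↦ h j, fun h j hj ↦ h j ?_ hj⟩
  have : 2 ^ (j + 1) < 2 ^ (m + 1) := (Nat.ge_two_pow_of_testBit hj.2).trans_lt hi
  exact Nat.succ_lt_succ_iff.1 ((Nat.pow_lt_pow_iff_right Nat.one_lt_two).1 this)

theorem forall_not_testBit_cyclic_iff {m i : ℕ} (hi : i < 2 ^ (m + 1)) :
    (∀ j < m + 1, ¬(i.testBit j ∧ i.testBit ((j + 1) % (m + 1)))) ↔
      IsFibbinary i ∧ (Odd i → i < 2 ^ m) := by
  have top_bit : i.testBit m ↔ 2 ^ m ≤ i :=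
    ⟨Nat.ge_two_pow_of_testBit, fun h ↦ Nat.testBit_of_two_pow_le_and_two_pow_add_one_gt h hi⟩
  have wrap : ¬(i.testBit m ∧ i.testBit ((m + 1) % (m + 1))) ↔ (Odd i → i < 2 ^ m) := by
    rw [top_bit, Nat.mod_self, Nat.testBit_zero, decide_eq_true_eq, ← Nat.odd_iff, ← not_lt]
    tauto
  have inner : (∀ j < m, ¬(i.testBit j ∧ i.testBit ((j + 1) % (m + 1)))) ↔ IsFibbinary i := by
    rw [isFibbinary_iff_forall_lt hi]
    refine forall₂_congr fun j hj ↦ ?_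
    rw [Nat.mod_eq_of_lt (Nat.succ_lt_succ hj)]
  rw [Nat.forall_lt_succ_right, inner, wrap]

theorem mem_fibCycSet_succ {m i : ℕ} :
    i ∈ fibCycSet (m + 1) ↔
      i ≠ 0 ∧ i < 2 ^ (m + 1) ∧ IsFibbinary i ∧ (Odd i → i < 2 ^ m) := by
  have hpow : 2 ^ (m + 1) = 2 * 2 ^ m := pow_succ' 2 m
  have hpos : 0 < 2 ^ m := by positivity
  rw [fibCycSet, Finset.mem_filter, Finset.mem_Icc]
  constructor
  · rintro ⟨⟨hge, hle⟩, hcyc⟩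
    have hi : i < 2 ^ (m + 1) := by lia
    exact ⟨by lia, hi, (forall_not_testBit_cyclic_iff hi).1 hcyc⟩
  · rintro ⟨h0, hi, hcyc⟩
    -- The all-ones word `2 ^ (m + 1) - 1` is odd with top bit set.
    have not_all_ones : i ≠ 2 ^ (m + 1) - 1 := by
      rintro rfl
      have := hcyc.2 (by rw [Nat.odd_iff]; lia)
      lia
    exact ⟨by lia, (forall_not_testBit_cyclic_iff hi).2 hcyc⟩

theorem two_mul_mem_fibCycSet_succ {m j : ℕ} :
    2 * j ∈ fibCycSet (m + 1) ↔ j ∈ fibSet m ∧ 2 * j ≠ 0 := by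
  have hlt : 2 * j < 2 ^ (m + 1) ↔ j < 2 ^ m := by rw [pow_succ']; lia
  have not_odd : ¬Odd (2 * j) := by simp
  rw [mem_fibCycSet_succ, mem_fibSet, isFibbinary_two_mul, hlt]
  tauto

theorem filter_even_fibCycSet_succ (m : ℕ) :
    (fibCycSet (m + 1)).filter (fun i => Even i) =
      ((fibSet m).image (fun j => 2 * j)) \ {0} := by
  ext i
  simp only [Finset.mem_filter, Finset.mem_sdiff, Finset.mem_image, Finset.mem_singleton]
  constructor
  · rintro ⟨hi, heven⟩
    obtain ⟨j, rfl⟩ := heven.two_dvd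
    obtain ⟨hj, h0⟩ := two_mul_mem_fibCycSet_succ.1 hi
    exact ⟨⟨j, hj, rfl⟩, h0⟩
  · rintro ⟨⟨j, hj, rfl⟩, h0⟩
    exact ⟨two_mul_mem_fibCycSet_succ.2 ⟨hj, h0⟩, even_two_mul j⟩

theorem odd_four_mul_add_one (j : ℕ) : Odd (4 * j + 1) :=
  ⟨2 * j, by ring⟩

theorem four_mul_add_one_mem_fibCycSet_add_three {m j : ℕ} :
    4 * j + 1 ∈ fibCycSet (m + 3) ↔ j ∈ fibSet m := by
  have hlt : 4 * j + 1 < 2 ^ (m + 2) ↔ j < 2 ^ m := by rw [pow_add]; lia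
  have lt_of_lt (h : 4 * j + 1 < 2 ^ (m + 2)) : 4 * j + 1 < 2 ^ (m + 3) :=
    h.trans (Nat.pow_lt_pow_succ Nat.one_lt_two)
  have odd := odd_four_mul_add_one j
  rw [mem_fibCycSet_succ, mem_fibSet, isFibbinary_four_mul_add_one]
  tauto

theorem filter_odd_fibCycSet_add_three (m : ℕ) :
    (fibCycSet (m + 3)).filter (fun i => Odd i) =
      (fibSet m).image (fun j => 4 * j + 1) := by
  ext i
  simp only [Finset.mem_filter, Finset.mem_image]
  constructor
  · rintro ⟨hi, k, rfl⟩
    obtain ⟨-, -, hfib, -⟩ := mem_fibCycSet_succ.1 hi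
    obtain ⟨j, rfl⟩ := (isFibbinary_two_mul_add_one.1 hfib).1.two_dvd
    rw [← mul_assoc] at hi ⊢
    exact ⟨j, four_mul_add_one_mem_fibCycSet_add_three.1 hi, rfl⟩
  · rintro ⟨j, hj, rfl⟩
    exact ⟨four_mul_add_one_mem_fibCycSet_add_three.2 hj, odd_four_mul_add_one j⟩

theorem fibCycSet_even_odd (m : ℕ) (hm : 4 ≤ m) :
    (fibCycSet m).filter (fun i => Even i) =
        ((fibSet (m - 1)).image (fun j => 2 * j)) \ {0} ∧
    (fibCycSet m).filter (fun i => Odd i) =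
        (fibSet (m - 3)).image (fun j => 4 * j + 1) := by
  obtain ⟨n, rfl⟩ := Nat.exists_eq_add_of_le' hm
  exact ⟨filter_even_fibCycSet_succ (n + 3), filter_odd_fibCycSet_add_three (n + 1)⟩
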